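/- Fix α > 1, M > 0 and a > 0, and set r₀ = |log ε|^α. There exist constants C > 0 and ε₀ ∈ (0,1) such that for every ε ∈ (0, ε₀), for every measurable ω : ℝ² → ℝ with |ω(y)| ≤ 3Mε^{−2} for almost every y, ∫_{ℝ²}|ω(y)| dy ≤ a, and support contained in {y ∈ ℝ² : |y₂| ≤ r₀/2}, and for every x ∈ ℝ² with |x₂| ≤ r₀/2, one has |∫_{ℝ²} (G(x,y) − K(x−y)) ω(y) dy| ≤ C/|log ε|^{α−1}. -/

import Mathlib

/-!
Write `d = |x - y|`, `R = r₀ + x₂`, `S = r₀ + y₂` and `D(θ) = d² + 2RS(1 - cos θ)`. The proof rests on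
the pointwise estimate `|G(x,y) - K(x-y)| ≤ (3 + log (1 + r₀/d)) / r₀` (`kernel_bound`).

Both components of `G` contain the integral of `D^{-3/2}`, up to terms with the extra weight
`1 - cos θ`. Replacing `1` by `cos (θ/2)` makes this integral explicit (`integral_cos_half`), with
value `2 / (d² √(d² + 4RS))`; multiplied by `S` it equals the planar `1/d²` up to `O(1/(r₀ d))`
because `|R - S| ≤ d` and `R, S ≥ r₀/2` (`main_term`). The weight `1 - cos (θ/2) ≤ 1 - cos θ` is an
error, since `2RS(1 - cos θ) ≤ D` (`error_bound`). The one term without a factor `d`, namely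
`RS ∫ (1 - cos θ) D^{-3/2}`, is at most `∫ dθ / (d + r₀ θ/π)`, a logarithm (`log_bound`).

Integrating against `ω`, the logarithm is split at the scale `ε` (`log_split`):
`log (1 + r₀/d) ≤ log (1 + r₀/ε) + 1 + (ε/d) 1_{d < ε}`. The first part is `O(|log ε|)` and is
paired with the mass bound, while the last has integral `O(ε²)` over the plane and is paired with
the bound `3M/ε²` on `ω`. Dividing by `r₀ = |log ε|^α` gives the rate.
-/

open MeasureTheory Real
open scoped RealInnerProductSpace

/-- The plane `ℝ²` with the Euclidean norm. -/
abbrev E2 := EuclideanSpace ℝ (Fin 2)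

open Classical in
/-- The two-dimensional Biot–Savart kernel
`K(x) = (1/(2π)) (−x₂, x₁)/|x|²`, with `K(0) = 0`. -/
noncomputable def K (x : E2) : E2 :=
  if x = 0 then 0
  else (2 * Real.pi * ‖x‖ ^ 2)⁻¹ • (WithLp.equiv 2 (Fin 2 → ℝ)).symm ![-(x 1), x 0]

/-- First component of the kernel `G`. -/
noncomputable def G1 (r₀ : ℝ) (x y : E2) : ℝ :=
  (2 * Real.pi)⁻¹ * ∫ θ in (0:ℝ)..Real.pi,
    ((r₀ + y 1) * ((r₀ + y 1) - (r₀ + x 1) * Real.cos θ)) /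
      (‖x - y‖ ^ 2 + 2 * (r₀ + x 1) * (r₀ + y 1) * (1 - Real.cos θ)) ^ ((3:ℝ)/2)

/-- Second component of the kernel `G`. -/
noncomputable def G2 (r₀ : ℝ) (x y : E2) : ℝ :=
  (2 * Real.pi)⁻¹ * ∫ θ in (0:ℝ)..Real.pi,
    ((r₀ + y 1) * (x 0 - y 0) * Real.cos θ) /
      (‖x - y‖ ^ 2 + 2 * (r₀ + x 1) * (r₀ + y 1) * (1 - Real.cos θ)) ^ ((3:ℝ)/2)

/-- The kernel `G(x,y) = (G₁(x,y), G₂(x,y))` as a vector in `ℝ²`. -/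
noncomputable def Gvec (r₀ : ℝ) (x y : E2) : E2 :=
  (WithLp.equiv 2 (Fin 2 → ℝ)).symm ![G1 r₀ x y, G2 r₀ x y]

/-! ### Integrals in the angle -/

lemma rpow_three_half {D : ℝ} (hD : 0 < D) : D ^ ((3:ℝ)/2) = D * √D := by
  rw [show (3:ℝ)/2 = 1 + 1/2 by norm_num, rpow_add hD, rpow_one, sqrt_eq_rpow]

/-- The factor `1 - cos θ` absorbs one power of `q + 2 * P * (1 - cos θ)`. -/
lemma weight_bound {q P c : ℝ} (hq : 0 < q) (hP : 0 < P) (hc : 0 ≤ c) :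
    c / (q + 2 * P * c) ^ ((3:ℝ)/2) ≤ 1 / (2 * P * √(q + 2 * P * c)) := by
  have hD : 0 < q + 2 * P * c := by positivity
  rw [rpow_three_half hD]
  have hs : 0 < √(q + 2 * P * c) := sqrt_pos.2 hD
  rw [div_le_div_iff₀ (by positivity) (by positivity)]
  have : 2 * P * c ≤ q + 2 * P * c := by linarith
  nlinarith [mul_le_mul_of_nonneg_right this hs.le]

lemma den_pos {d P : ℝ} (hd : 0 < d) (hP : 0 < P) (θ : ℝ) :
    0 < d ^ 2 + 2 * P * (1 - cos θ) := by
  have := cos_le_one θ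
  have : 0 ≤ 2 * P * (1 - cos θ) := by apply mul_nonneg <;> linarith
  positivity

lemma integrable_over_den {d P : ℝ} (hd : 0 < d) (hP : 0 < P) {f : ℝ → ℝ} (hf : Continuous f) :
    IntervalIntegrable (fun θ => f θ / (d ^ 2 + 2 * P * (1 - cos θ)) ^ ((3:ℝ)/2)) volume 0 π := by
  apply Continuous.intervalIntegrable
  refine hf.div ?_ fun θ => (rpow_pos_of_pos (den_pos hd hP θ) _).ne'
  exact Continuous.rpow_const (by fun_prop) fun θ => Or.inl (den_pos hd hP θ).ne'

/-- `2 sin (θ/2) / (d² √D(θ))`, with `D(θ) = d² + 2P(1 - cos θ) = d² + 4P sin² (θ/2)`, is a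
primitive of `cos (θ/2) / D(θ)^{3/2}`: in the variable `u = 2 sin (θ/2)` this is the primitive of
`(d² + P u²)^{-3/2}`. -/
lemma integral_cos_half {d P : ℝ} (hd : 0 < d) (hP : 0 < P) :
    ∫ θ in (0:ℝ)..π, cos (θ / 2) / (d ^ 2 + 2 * P * (1 - cos θ)) ^ ((3:ℝ)/2)
      = 2 / (d ^ 2 * √(d ^ 2 + 4 * P)) := by
  have key : ∀ θ ∈ Set.uIcc (0:ℝ) π,
      HasDerivAt (fun θ => 2 * sin (θ / 2) / (d ^ 2 * √(d ^ 2 + 2 * P * (1 - cos θ))))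
        (cos (θ / 2) / (d ^ 2 + 2 * P * (1 - cos θ)) ^ ((3:ℝ)/2)) θ := by
    intro θ _
    have hD := den_pos hd hP θ
    have hs := sqrt_pos.2 hD
    have h1 : HasDerivAt (fun θ : ℝ => 2 * sin (θ / 2)) (2 * (cos (θ / 2) * (1 / 2))) θ :=
      ((hasDerivAt_id θ).div_const 2).sin.const_mul 2
    have h2 : HasDerivAt (fun θ : ℝ => d ^ 2 + 2 * P * (1 - cos θ)) (2 * P * sin θ) θ := by
      simpa using (((hasDerivAt_cos θ).const_sub 1).const_mul (2 * P)).const_add (d ^ 2)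
    have h3 := h1.div ((h2.sqrt hD.ne').const_mul (d ^ 2)) (by positivity)
    refine h3.congr_deriv ?_
    rw [rpow_three_half hD]
    have e1 : cos θ = 1 - 2 * sin (θ / 2) ^ 2 := by
      have := cos_sq' (θ / 2)
      have h := cos_two_mul (θ / 2)
      rw [show 2 * (θ / 2) = θ by ring] at h
      linarith
    have e2 : sin θ = 2 * sin (θ / 2) * cos (θ / 2) := by
      rw [← sin_two_mul]; ring_nf
    have hsq := sq_sqrt hD.le
    have hDv : d ^ 2 + 2 * P * (1 - cos θ) = d ^ 2 + 4 * P * sin (θ / 2) ^ 2 := by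
      rw [e1]; ring
    rw [hDv] at hD hs hsq ⊢
    rw [e2]
    set s := √(d ^ 2 + 4 * P * sin (θ / 2) ^ 2)
    rw [← hsq]
    field_simp
    rw [hsq]
    ring
  rw [intervalIntegral.integral_eq_sub_of_hasDerivAt key
    (integrable_over_den hd hP (by fun_prop))]
  simp
  ring_nf

/-- If the weight `w` is at most `1 - cos θ`, its integral against `D^{-3/2}` gains a factor of
order `d / √P` over that of the constant `1`, which has order `1 / (d² √P)` when `d ≤ √P`. -/
lemma error_bound {d P : ℝ} (hd : 0 < d) (hP : 0 < P) {w : ℝ → ℝ} (hw : Continuous w)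
    (h0 : ∀ θ, 0 ≤ θ → θ ≤ π → 0 ≤ w θ) (h1 : ∀ θ, 0 ≤ θ → θ ≤ π → w θ ≤ 1 - cos θ) :
    0 ≤ ∫ θ in (0:ℝ)..π, w θ / (d ^ 2 + 2 * P * (1 - cos θ)) ^ ((3:ℝ)/2) ∧
    ∫ θ in (0:ℝ)..π, w θ / (d ^ 2 + 2 * P * (1 - cos θ)) ^ ((3:ℝ)/2) ≤ π / (2 * P * d) := by
  constructor
  · apply intervalIntegral.integral_nonneg pi_pos.le
    intro θ hθ
    exact div_nonneg (h0 θ hθ.1 hθ.2) (rpow_nonneg (den_pos hd hP θ).le _)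
  · have : ∫ θ in (0:ℝ)..π, 1 / (2 * P * d) = π / (2 * P * d) := by simp; ring
    rw [← this]
    apply intervalIntegral.integral_mono_on pi_pos.le (integrable_over_den hd hP hw) (by simp)
    intro θ hθ
    have hc : 0 ≤ 1 - cos θ := by linarith [cos_le_one θ]
    calc w θ / (d ^ 2 + 2 * P * (1 - cos θ)) ^ ((3:ℝ)/2)
        ≤ (1 - cos θ) / (d ^ 2 + 2 * P * (1 - cos θ)) ^ ((3:ℝ)/2) :=
          div_le_div_of_nonneg_right (h1 θ hθ.1 hθ.2) (rpow_nonneg (den_pos hd hP θ).le _)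
      _ ≤ 1 / (2 * P * √(d ^ 2 + 2 * P * (1 - cos θ))) := weight_bound (by positivity) hP hc
      _ ≤ 1 / (2 * P * d) := by
          have : d ≤ √(d ^ 2 + 2 * P * (1 - cos θ)) := by
            apply le_sqrt_of_sq_le
            have : 0 ≤ 2 * P * (1 - cos θ) := by positivity
            linarith
          gcongr

/-- The logarithmic term, which comes from the curvature of the ring. -/
lemma log_bound {d P r : ℝ} (hd : 0 < d) (hr : 0 < r) (hP : (r / 2) ^ 2 ≤ P) :
    P * ∫ θ in (0:ℝ)..π, (1 - cos θ) / (d ^ 2 + 2 * P * (1 - cos θ)) ^ ((3:ℝ)/2)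
      ≤ π / r * log (1 + r / d) := by
  have hP0 : 0 < P := lt_of_lt_of_le (by positivity) hP
  have hden : ∀ θ : ℝ, 0 ≤ θ → 0 < d + r / π * θ := fun θ hθ => by positivity
  have hint : ∫ θ in (0:ℝ)..π, (d + r / π * θ)⁻¹ = π / r * log (1 + r / d) := by
    have key : ∀ θ ∈ Set.uIcc (0:ℝ) π,
        HasDerivAt (fun θ => π / r * log (d + r / π * θ)) (d + r / π * θ)⁻¹ θ := by
      intro θ hθ
      rw [Set.uIcc_of_le pi_pos.le] at hθ
      have h := hden θ hθ.1
      have h2 : HasDerivAt (fun θ : ℝ => d + r / π * θ) (r / π) θ := by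
        simpa using ((hasDerivAt_id θ).const_mul (r / π)).const_add d
      refine ((h2.log h.ne').const_mul (π / r)).congr_deriv ?_
      field_simp
    rw [intervalIntegral.integral_eq_sub_of_hasDerivAt key]
    · have : d + r / π * π = d * (1 + r / d) := by field_simp
      rw [this, log_mul hd.ne' (by positivity)]
      simp; ring
    · apply ContinuousOn.intervalIntegrable
      rw [Set.uIcc_of_le pi_pos.le]
      exact ContinuousOn.inv₀ (by fun_prop) fun θ hθ => (hden θ hθ.1).ne'
  rw [← hint, ← intervalIntegral.integral_const_mul]
  apply intervalIntegral.integral_mono_on pi_pos.le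
  · exact (integrable_over_den hd hP0 (by fun_prop)).const_mul P
  · apply ContinuousOn.intervalIntegrable
    rw [Set.uIcc_of_le pi_pos.le]
    exact ContinuousOn.inv₀ (by fun_prop) fun θ hθ => (hden θ hθ.1).ne'
  intro θ hθ
  have hc : 0 ≤ 1 - cos θ := by linarith [cos_le_one θ]
  have hD := den_pos hd hP0 θ
  have hs := sqrt_pos.2 hD
  have hcos : 2 / π ^ 2 * θ ^ 2 ≤ 1 - cos θ := by
    have := cos_le_one_sub_mul_cos_sq (x := θ) (by rw [abs_of_nonneg hθ.1]; exact hθ.2)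
    linarith
  have hlow : d + r / π * θ ≤ 2 * √(d ^ 2 + 2 * P * (1 - cos θ)) := by
    have h1 : 2 * (r / 2) ^ 2 * (2 / π ^ 2 * θ ^ 2) ≤ 2 * P * (1 - cos θ) := by gcongr
    have h2 : 2 * (r / 2) ^ 2 * (2 / π ^ 2 * θ ^ 2) = (r / π * θ) ^ 2 := by
      field_simp
    have h3 := sq_sqrt hD.le
    apply le_of_sq_le_sq _ (by positivity)
    nlinarith [sq_nonneg (d - r / π * θ)]
  calc P * ((1 - cos θ) / (d ^ 2 + 2 * P * (1 - cos θ)) ^ ((3:ℝ)/2))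
      ≤ P * (1 / (2 * P * √(d ^ 2 + 2 * P * (1 - cos θ)))) := by
        exact mul_le_mul_of_nonneg_left (weight_bound (by positivity) hP0 hc) hP0.le
    _ = (2 * √(d ^ 2 + 2 * P * (1 - cos θ)))⁻¹ := by field_simp
    _ ≤ (d + r / π * θ)⁻¹ := by gcongr; exact hden θ hθ.1

/-- Comparison of the leading part of both components of `G` with its planar counterpart. -/
lemma main_term {d R S r : ℝ} (hd : 0 < d) (hr : 0 < r) (hR : r / 2 ≤ R) (hS : r / 2 ≤ S)
    (hRS : |S - R| ≤ d) :
    d * |S * (∫ θ in (0:ℝ)..π, 1 / (d ^ 2 + 2 * (R * S) * (1 - cos θ)) ^ ((3:ℝ)/2)) - 1 / d ^ 2|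
      ≤ (π + 3) / r := by
  have hR0 : 0 < R := by linarith
  have hS0 : 0 < S := by linarith
  have hP : 0 < R * S := mul_pos hR0 hS0
  have hsplit : (∫ θ in (0:ℝ)..π, 1 / (d ^ 2 + 2 * (R * S) * (1 - cos θ)) ^ ((3:ℝ)/2)) =
      2 / (d ^ 2 * √(d ^ 2 + 4 * (R * S))) + ∫ θ in (0:ℝ)..π,
        (1 - cos (θ / 2)) / (d ^ 2 + 2 * (R * S) * (1 - cos θ)) ^ ((3:ℝ)/2) := by
    rw [← integral_cos_half hd hP, ← intervalIntegral.integral_add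
      (integrable_over_den hd hP (by fun_prop)) (integrable_over_den hd hP (by fun_prop))]
    congr 1; ext θ; ring
  obtain ⟨hE0, hE1⟩ := error_bound hd hP (w := fun θ => 1 - cos (θ / 2)) (by fun_prop)
    (fun θ _ _ => by linarith [cos_le_one (θ / 2)])
    (fun θ h0 h1 => by
      have := cos_le_cos_of_nonneg_of_le_pi (x := θ / 2) (y := θ) (by linarith) h1 (by linarith)
      linarith)
  rw [hsplit]
  set E := ∫ θ in (0:ℝ)..π,
        (1 - cos (θ / 2)) / (d ^ 2 + 2 * (R * S) * (1 - cos θ)) ^ ((3:ℝ)/2)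
  set q := √(d ^ 2 + 4 * (R * S)) with hq
  have hq2 : q ^ 2 = d ^ 2 + 4 * (R * S) := sq_sqrt (by positivity)
  have hq0 : 0 < q := sqrt_pos.2 (by positivity)
  have hqd : d ≤ q := le_sqrt_of_sq_le (by nlinarith)
  have hqr : r ≤ q := by
    apply le_sqrt_of_sq_le
    have := mul_le_mul hR hS (by positivity) hR0.le
    nlinarith [sq_nonneg d]
  have h1 : |2 * S - q| ≤ 3 * d := by
    have hf : (2 * S - q) * (2 * S + q) = 4 * S * (S - R) - d ^ 2 := by
      linear_combination -hq2
    rw [abs_le] at hRS ⊢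
    obtain ⟨ha, hb⟩ := hRS
    have hsum : 0 < 2 * S + q := by positivity
    constructor
    · by_contra! hlt
      nlinarith [mul_lt_mul_of_pos_right hlt hsum, mul_le_mul_of_nonneg_left ha hS0.le]
    · by_contra! hlt
      nlinarith [mul_lt_mul_of_pos_right hlt hsum, mul_le_mul_of_nonneg_left hb hS0.le]
  have h2 : d * |S * (2 / (d ^ 2 * q)) - 1 / d ^ 2| ≤ 3 / r := by
    have : S * (2 / (d ^ 2 * q)) - 1 / d ^ 2 = (2 * S - q) / (d ^ 2 * q) := by field_simp
    rw [this, abs_div, abs_of_pos (show 0 < d ^ 2 * q by positivity)]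
    calc d * (|2 * S - q| / (d ^ 2 * q)) ≤ d * (3 * d / (d ^ 2 * q)) := by gcongr
      _ = 3 / q := by field_simp
      _ ≤ 3 / r := by gcongr
  have h3 : d * (S * E) ≤ π / r := by
    calc d * (S * E) ≤ d * (S * (π / (2 * (R * S) * d))) := by gcongr
      _ = π / (2 * R) := by field_simp
      _ ≤ π / r := by gcongr; linarith
  calc d * |S * (2 / (d ^ 2 * q) + E) - 1 / d ^ 2|
      = d * |(S * (2 / (d ^ 2 * q)) - 1 / d ^ 2) + S * E| := by ring_nf
    _ ≤ d * (|S * (2 / (d ^ 2 * q)) - 1 / d ^ 2| + |S * E|) := by gcongr; exact abs_add_le _ _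
    _ = d * |S * (2 / (d ^ 2 * q)) - 1 / d ^ 2| + d * (S * E) := by
        rw [abs_of_nonneg (mul_nonneg hS0.le hE0)]; ring
    _ ≤ 3 / r + π / r := add_le_add h2 h3
    _ = (π + 3) / r := by ring

/-! ### Pointwise comparison of the kernels -/

lemma E2_norm_le (v : E2) : ‖v‖ ≤ |v 0| + |v 1| := by
  rw [EuclideanSpace.norm_eq, Fin.sum_univ_two]
  apply sqrt_le_iff.2 ⟨by positivity, ?_⟩
  simp only [norm_eq_abs]
  nlinarith [mul_nonneg (abs_nonneg (v 0)) (abs_nonneg (v 1))]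

/-- The pointwise comparison of the two kernels. -/
lemma kernel_bound {r : ℝ} (hr : 0 < r) {x y : E2} (hxy : y ≠ x) (hx : |x 1| ≤ r / 2)
    (hy : |y 1| ≤ r / 2) :
    ‖Gvec r x y - K (x - y)‖ ≤ (3 + log (1 + r / ‖x - y‖)) / r := by
  have hne : x - y ≠ 0 := sub_ne_zero.2 hxy.symm
  have hd : 0 < ‖x - y‖ := norm_pos_iff.2 hne
  have hc0 : |x 0 - y 0| ≤ ‖x - y‖ := by simpa using PiLp.norm_apply_le (x - y) 0
  have hc1 : |y 1 - x 1| ≤ ‖x - y‖ := by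
    rw [abs_sub_comm]; simpa using PiLp.norm_apply_le (x - y) 1
  have hR : r / 2 ≤ r + x 1 := by linarith [(abs_le.1 hx).1]
  have hS : r / 2 ≤ r + y 1 := by linarith [(abs_le.1 hy).1]
  have e0 : (Gvec r x y - K (x - y)) 0 =
      G1 r x y - (2 * π * ‖x - y‖ ^ 2)⁻¹ * (y 1 - x 1) := by
    simp [Gvec, K, hne]
  have e1 : (Gvec r x y - K (x - y)) 1 =
      G2 r x y - (2 * π * ‖x - y‖ ^ 2)⁻¹ * (x 0 - y 0) := by
    simp [Gvec, K, hne]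
  refine (E2_norm_le _).trans ?_
  rw [e0, e1]
  unfold G1 G2
  set d := ‖x - y‖
  set R := r + x 1 with hRdef
  set S := r + y 1 with hSdef
  have hsr : y 1 - x 1 = S - R := by rw [hRdef, hSdef]; ring
  rw [hsr] at hc1 ⊢
  set p := x 0 - y 0
  have hR0 : 0 < R := by linarith
  have hS0 : 0 < S := by linarith
  have hP : 0 < R * S := mul_pos hR0 hS0
  have hm := main_term hd hr hR hS hc1
  have hP4 : (r / 2) ^ 2 ≤ R * S := by
    rw [sq]; exact mul_le_mul hR hS (by positivity) hR0.le
  have hl := log_bound hd hr hP4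
  obtain ⟨hJ0, hJ1⟩ := error_bound hd hP (w := fun θ => 1 - cos θ) (by fun_prop)
    (fun θ _ _ => by linarith [cos_le_one θ]) (fun θ _ _ => le_rfl)
  have i1 : (∫ θ in (0:ℝ)..π, (S * (S - R * cos θ)) /
      (d ^ 2 + 2 * R * S * (1 - cos θ)) ^ ((3:ℝ)/2)) =
      (S * (S - R)) * (∫ θ in (0:ℝ)..π, 1 / (d ^ 2 + 2 * (R * S) * (1 - cos θ)) ^ ((3:ℝ)/2)) +
      (R * S) * ∫ θ in (0:ℝ)..π, (1 - cos θ) /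
        (d ^ 2 + 2 * (R * S) * (1 - cos θ)) ^ ((3:ℝ)/2) := by
    rw [← intervalIntegral.integral_const_mul, ← intervalIntegral.integral_const_mul,
      ← intervalIntegral.integral_add
      ((integrable_over_den hd hP (by fun_prop)).const_mul _)
      ((integrable_over_den hd hP (by fun_prop)).const_mul _)]
    congr 1; ext θ; rw [← mul_assoc 2 R S]; ring
  have i2 : (∫ θ in (0:ℝ)..π, (S * p * cos θ) /
      (d ^ 2 + 2 * R * S * (1 - cos θ)) ^ ((3:ℝ)/2)) =
      (S * p) * (∫ θ in (0:ℝ)..π, 1 / (d ^ 2 + 2 * (R * S) * (1 - cos θ)) ^ ((3:ℝ)/2)) -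
      (S * p) * ∫ θ in (0:ℝ)..π, (1 - cos θ) /
        (d ^ 2 + 2 * (R * S) * (1 - cos θ)) ^ ((3:ℝ)/2) := by
    rw [← intervalIntegral.integral_const_mul, ← intervalIntegral.integral_const_mul,
      ← intervalIntegral.integral_sub
      ((integrable_over_den hd hP (by fun_prop)).const_mul _)
      ((integrable_over_den hd hP (by fun_prop)).const_mul _)]
    congr 1; ext θ; rw [← mul_assoc 2 R S]; ring
  rw [i1, i2]
  set I := ∫ θ in (0:ℝ)..π, 1 / (d ^ 2 + 2 * (R * S) * (1 - cos θ)) ^ ((3:ℝ)/2)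
  set J := ∫ θ in (0:ℝ)..π, (1 - cos θ) / (d ^ 2 + 2 * (R * S) * (1 - cos θ)) ^ ((3:ℝ)/2)
  have hpi := pi_pos
  have f1 : (2 * π)⁻¹ * (S * (S - R) * I + R * S * J) - (2 * π * d ^ 2)⁻¹ * (S - R) =
      (2 * π)⁻¹ * ((S - R) * (S * I - 1 / d ^ 2) + R * S * J) := by field_simp; ring
  have f2 : (2 * π)⁻¹ * (S * p * I - S * p * J) - (2 * π * d ^ 2)⁻¹ * p =
      (2 * π)⁻¹ * (p * (S * I - 1 / d ^ 2) - p * (S * J)) := by field_simp; ring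
  have hJd : d * (S * J) ≤ π / r := by
    calc d * (S * J) ≤ d * (S * (π / (2 * (R * S) * d))) := by gcongr
      _ = π / (2 * R) := by field_simp
      _ ≤ π / r := by gcongr; linarith
  have g1 : |(S - R) * (S * I - 1 / d ^ 2) + R * S * J| ≤
      (π + 3) / r + π / r * log (1 + r / d) := by
    refine (abs_add_le _ _).trans (add_le_add ?_ ?_)
    · rw [abs_mul]; exact (mul_le_mul_of_nonneg_right hc1 (abs_nonneg _)).trans hm
    · rw [abs_of_nonneg (by positivity)]; exact hl
  have g2 : |p * (S * I - 1 / d ^ 2) - p * (S * J)| ≤ (π + 3) / r + π / r := by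
    refine (abs_sub _ _).trans (add_le_add ?_ ?_)
    · rw [abs_mul]; exact (mul_le_mul_of_nonneg_right hc0 (abs_nonneg _)).trans hm
    · rw [abs_mul, abs_of_nonneg (show 0 ≤ S * J by positivity)]
      exact (mul_le_mul_of_nonneg_right hc0 (by positivity)).trans hJd
  rw [f1, f2, abs_mul, abs_mul, abs_of_pos (show 0 < (2 * π)⁻¹ by positivity), ← mul_add]
  have hlog : 0 ≤ log (1 + r / d) := log_nonneg (by have : 0 < r / d := by positivity
                                                    linarith)
  calc (2 * π)⁻¹ * (|(S - R) * (S * I - 1 / d ^ 2) + R * S * J| +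
        |p * (S * I - 1 / d ^ 2) - p * (S * J)|)
      ≤ (2 * π)⁻¹ * (((π + 3) / r + π / r * log (1 + r / d)) + ((π + 3) / r + π / r)) := by
        gcongr
    _ = (3 * π + 6 + π * log (1 + r / d)) / (2 * π * r) := by field_simp; ring
    _ ≤ (3 + log (1 + r / d)) / r := by
        rw [div_le_div_iff₀ (by positivity) hr]
        have : 0 ≤ π * log (1 + r / d) := by positivity
        nlinarith [pi_gt_three]

/-! ### The logarithm near the diagonal -/

/-- The function `ε / t` truncated to `t < ε` and set to zero for `t ≥ ε`. -/
noncomputable def nearPart (ε t : ℝ) : ℝ := if t < ε then ε / t else 0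

lemma nearPart_radial {ε : ℝ} :
    Set.EqOn (fun t : ℝ => t ^ (Module.finrank ℝ E2 - 1) • nearPart ε t)
      (Set.indicator (Set.Iio ε) fun _ => ε) (Set.Ioi 0) := by
  intro t ht
  have : (0:ℝ) < t := ht
  by_cases h : t < ε
  · simp [nearPart, h]; field_simp
  · simp [nearPart, h]

lemma integrable_nearPart {ε : ℝ} (x : E2) :
    Integrable (fun y : E2 => nearPart ε ‖x - y‖) := by
  have : Integrable (fun z : E2 => nearPart ε ‖z‖) := by
    rw [integrable_fun_norm_addHaar, integrableOn_congr_fun nearPart_radial measurableSet_Ioi,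
      IntegrableOn, integrable_indicator_iff measurableSet_Iio, IntegrableOn,
      Measure.restrict_restrict measurableSet_Iio, Set.Iio_inter_Ioi]
    simp
  exact this.comp_sub_left x

lemma integral_nearPart {ε : ℝ} (hε : 0 < ε) (x : E2) :
    ∫ y : E2, nearPart ε ‖x - y‖ = 2 * volume.real (Metric.ball (0:E2) 1) * ε ^ 2 := by
  rw [integral_sub_left_eq_self (fun z : E2 => nearPart ε ‖z‖) volume x,
    integral_fun_norm_addHaar, setIntegral_congr_fun measurableSet_Ioi nearPart_radial,
    integral_indicator measurableSet_Iio, Measure.restrict_restrict measurableSet_Iio,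
    Set.Iio_inter_Ioi]
  simp [hε.le]
  ring

/-- The logarithm is split at the scale `ε`. -/
lemma log_split {r d ε : ℝ} (hr : 0 < r) (hd : 0 < d) (hε : 0 < ε) :
    log (1 + r / d) ≤ log (1 + r / ε) + 1 + nearPart ε d := by
  have h1 : log (1 + r / d) ≤ log ((1 + r / ε) * (1 + ε / d)) := by
    apply log_le_log (by positivity)
    have : (1 + r / ε) * (1 + ε / d) = 1 + r / d + (r / ε + ε / d) := by field_simp; ring
    rw [this]
    have : 0 < r / ε + ε / d := by positivity
    linarith
  rw [log_mul (by positivity) (by positivity)] at h1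
  have h2 : log (1 + ε / d) ≤ ε / d := by
    have := log_le_sub_one_of_pos (show 0 < 1 + ε / d by positivity)
    linarith
  have h3 : ε / d ≤ 1 + nearPart ε d := by
    unfold nearPart
    split_ifs with h
    · linarith
    · rw [div_le_iff₀ hd]; linarith
  linarith

/-! ### Integration against the vorticity -/

/-- The velocity field generated through `G` by a concentrated vortex ring differs
from the planar Biot–Savart velocity by at most `C/|log ε|^{α−1}`. -/
theorem stmt4 (α M a : ℝ) (hα : 1 < α) (hM : 0 < M) (ha : 0 < a) :
    ∃ C > (0:ℝ), ∃ ε₀ ∈ Set.Ioo (0:ℝ) 1, ∀ ε : ℝ, ε ∈ Set.Ioo 0 ε₀ →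
      ∀ ω : E2 → ℝ, Measurable ω → (∀ᵐ y, |ω y| ≤ 3 * M / ε ^ 2) →
        Integrable ω → (∫ y, |ω y|) ≤ a →
        Function.support ω ⊆ {y : E2 | |y 1| ≤ |Real.log ε| ^ α / 2} →
        ∀ x : E2, |x 1| ≤ |Real.log ε| ^ α / 2 →
          ‖∫ y, ω y • (Gvec (|Real.log ε| ^ α) x y - K (x - y))‖ ≤
            C / |Real.log ε| ^ (α - 1) := by
  set V := volume.real (Metric.ball (0:E2) 1) with hV
  have hV0 : 0 ≤ V := measureReal_nonneg
  refine ⟨a * (6 + α) + 6 * M * V, by positivity, exp (-1), ⟨exp_pos _, by simp⟩, ?_⟩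
  rintro ε ⟨hε, hε1⟩ ω - hω hωi hωa hsupp x hx
  have hlogε : log ε < -1 := by rwa [log_lt_iff_lt_exp hε]
  set L := |log ε| with hL
  have hLe : log ε = -L := by rw [hL, abs_of_neg (by linarith)]; ring
  have hL1 : 1 < L := by linarith
  set r := L ^ α with hrdef
  have hr1 : 1 ≤ r := one_le_rpow hL1.le (by linarith)
  have hr : 0 < r := by linarith
  have hε1' : ε < 1 := hε1.trans (by simp)
  have hlog : log (1 + r / ε) ≤ (α + 2) * L := by
    have h1 : 1 + r / ε ≤ 2 * (r / ε) := by
      have : 1 ≤ r / ε := by rw [le_div_iff₀ hε]; linarith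
      linarith
    have h2 := log_le_log (by positivity) h1
    rw [log_mul (by norm_num) (by positivity), log_div hr.ne' hε.ne', hrdef,
      log_rpow (by linarith), hLe] at h2
    have h3 : log 2 ≤ 1 := by linarith [log_two_lt_d9]
    have h4 : log L ≤ L := by linarith [log_le_sub_one_of_pos (show 0 < L by linarith)]
    have h5 : α * log L ≤ α * L := by gcongr
    linarith
  set A := 4 + (α + 2) * L with hA
  have hA0 : 0 ≤ A := by positivity
  have hnear : ∀ d, 0 < d → 0 ≤ nearPart ε d := fun d hd => by
    unfold nearPart; split_ifs <;> positivity
  have hbound : ∀ᵐ y, ‖ω y • (Gvec r x y - K (x - y))‖ ≤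
      (A / r) * |ω y| + (3 * M / ε ^ 2 / r) * nearPart ε ‖x - y‖ := by
    have hne : ∀ᵐ y : E2, y ≠ x := by
      simp [ae_iff]
    filter_upwards [hω, hne] with y hy hyx
    have hd : 0 < ‖x - y‖ := norm_pos_iff.2 (sub_ne_zero.2 hyx.symm)
    have hn := hnear _ hd
    by_cases h0 : ω y = 0
    · simp only [h0, zero_smul, norm_zero, abs_zero, mul_zero, zero_add]
      positivity
    have hk := kernel_bound hr hyx hx (hsupp h0)
    rw [norm_smul, norm_eq_abs]
    calc |ω y| * ‖Gvec r x y - K (x - y)‖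
        ≤ |ω y| * ((A + nearPart ε ‖x - y‖) / r) := by
          gcongr
          refine hk.trans (div_le_div_of_nonneg_right ?_ hr.le)
          linarith [log_split hr hd hε]
      _ = (A / r) * |ω y| + |ω y| / r * nearPart ε ‖x - y‖ := by ring
      _ ≤ _ := by gcongr
  have hgi : Integrable fun y => (A / r) * |ω y| + (3 * M / ε ^ 2 / r) * nearPart ε ‖x - y‖ :=
    (hωi.abs.const_mul _).add ((integrable_nearPart x).const_mul _)
  refine (norm_integral_le_of_norm_le hgi hbound).trans ?_
  rw [integral_add (hωi.abs.const_mul _) ((integrable_nearPart x).const_mul _),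
    integral_const_mul, integral_const_mul, integral_nearPart hε, ← hV]
  have hLr : L ^ (α - 1) = r / L := by rw [rpow_sub_one (by linarith)]
  calc A / r * (∫ y, |ω y|) + 3 * M / ε ^ 2 / r * (2 * V * ε ^ 2)
      ≤ A / r * a + 3 * M / ε ^ 2 / r * (2 * V * ε ^ 2) := by gcongr
    _ = (A * a + 6 * M * V) / r := by field_simp; ring
    _ ≤ ((6 + α) * L * a + 6 * M * V * L) / r := by
        have h1 : A ≤ (6 + α) * L := by rw [hA]; linarith
        have h2 : 6 * M * V ≤ 6 * M * V * L := le_mul_of_one_le_right (by positivity) hL1.le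
        gcongr
    _ = (a * (6 + α) + 6 * M * V) / L ^ (α - 1) := by rw [hLr]; field_simp
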